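/- Let C be a conjugation on the complex Hilbert space K, let S be a bounded normal operator on K with S♭ = S, and let E be the spectral measure of S on 𝔖 = σ(S). Let F assign to each A ∈ Bor_E(𝔖) a self-adjoint idempotent F(A) ∈ B(K) such that F(A)♭ = F(A), F(∅) = 0, F(𝔖) = I, F(A ∩ B) = F(A)F(B) for all A, B ∈ Bor_E(𝔖), and the set functions A ↦ ⟨F(A)ξ, η⟩ are countably additive on Bor_E(𝔖) for all ξ, η ∈ K. Suppose in addition that for every A ∈ Bor_E(𝔖): (a) S(F(A)K) ⊆ F(A)K, and (b) the spectrum of the restriction S|F(A)K is contained in the closure [A]. Then F(A) = E(A) for every A ∈ Bor_E(𝔖). -/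

import Mathlib

open MeasureTheory
open scoped InnerProductSpace ComplexConjugate ENNReal

/-- A conjugation on a complex Hilbert space `K`. -/
structure IsConjugation {K : Type*} [NormedAddCommGroup K] [InnerProductSpace ℂ K]
    (C : K → K) : Prop where
  map_add : ∀ x y : K, C (x + y) = C x + C y
  map_smul : ∀ (a : ℂ) (x : K), C (a • x) = (conj a) • C x
  invol : ∀ x : K, C (C x) = x
  inner_map : ∀ x y : K, ⟪C x, C y⟫_ℂ = conj ⟪x, y⟫_ℂ

/-- A (projection-valued) spectral measure on the Borel subsets of the set `𝔖 ⊆ ℂ`,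
together with the family `μ` of its associated diagonal scalar measures
`μ ξ (A) = ⟨E(A)ξ, ξ⟩`. -/
structure IsSpectralMeasure {K : Type*} [NormedAddCommGroup K] [InnerProductSpace ℂ K]
    [CompleteSpace K] (𝔖 : Set ℂ) (E : Set ℂ → K →L[ℂ] K) (μ : K → Measure ℂ) : Prop where
  selfAdjoint : ∀ A : Set ℂ, MeasurableSet A → A ⊆ 𝔖 → IsSelfAdjoint (E A)
  empty : E ∅ = 0
  univ : E 𝔖 = 1
  inter : ∀ A B : Set ℂ, MeasurableSet A → MeasurableSet B → A ⊆ 𝔖 → B ⊆ 𝔖 →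
    E (A ∩ B) = E A ∘L E B
  countablyAdditive : ∀ (ξ η : K) (A : ℕ → Set ℂ), (∀ n, MeasurableSet (A n)) →
    (∀ n, A n ⊆ 𝔖) → Pairwise (Function.onFun Disjoint A) →
    HasSum (fun n => ⟪η, E (A n) ξ⟫_ℂ) ⟪η, E (⋃ n, A n) ξ⟫_ℂ
  measure_eq : ∀ (ξ : K) (A : Set ℂ), MeasurableSet A → A ⊆ 𝔖 →
    μ ξ A = ENNReal.ofReal (⟪ξ, E A ξ⟫_ℂ).re
  measure_compl : ∀ ξ : K, μ ξ 𝔖ᶜ = 0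

/-- The polarized integral `∫_𝔖 f dμ_{ξ,η}` of `f` against the complex measure
`μ_{ξ,η}(A) = ⟨E(A)ξ, η⟩`, expressed through the four diagonal (positive) measures. -/
noncomputable def specInt {K : Type*} [NormedAddCommGroup K] [InnerProductSpace ℂ K]
    (μ : K → Measure ℂ) (f : ℂ → ℂ) (ξ η : K) : ℂ :=
  (4 : ℂ)⁻¹ * (((∫ z, f z ∂(μ (ξ + η))) - ∫ z, f z ∂(μ (ξ - η)))
    + Complex.I * ((∫ z, f z ∂(μ (ξ + Complex.I • η))) - ∫ z, f z ∂(μ (ξ - Complex.I • η))))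

/-- The image `A^c = {conj z : z ∈ A}` of a subset of `ℂ` under complex conjugation. -/
def conjSet (A : Set ℂ) : Set ℂ := (fun z => conj z) '' A

/-- The collection `Bor_E(𝔖)` of Borel subsets `A ⊆ 𝔖` with `C ∘ E(A) ∘ C = E(A)`. -/
def borE {K : Type*} [NormedAddCommGroup K] [InnerProductSpace ℂ K] [CompleteSpace K]
    (C : K → K) (𝔖 : Set ℂ) (E : Set ℂ → K →L[ℂ] K) : Set (Set ℂ) :=
  {A | MeasurableSet A ∧ A ⊆ 𝔖 ∧ ∀ ξ : K, C (E A (C ξ)) = E A ξ}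


/-- Working version of a projection-valued measure on all of `ℂ`, supported in a ball. -/
structure PVM {K : Type*} [NormedAddCommGroup K] [InnerProductSpace ℂ K]
    [CompleteSpace K] (E : Set ℂ → K →L[ℂ] K) (μ : K → Measure ℂ) (r : ℝ) : Prop where
  sa : ∀ (B : Set ℂ), MeasurableSet B → ∀ x y, ⟪E B x, y⟫_ℂ = ⟪x, E B y⟫_ℂ
  univ : E Set.univ = 1
  inter : ∀ A B : Set ℂ, MeasurableSet A → MeasurableSet B → ∀ x, E (A ∩ B) x = E A (E B x)
  meas : ∀ (ξ : K) (B : Set ℂ), MeasurableSet B → μ ξ B = ENNReal.ofReal (‖E B ξ‖ ^ 2)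
  ball : ∀ ξ : K, ∀ᵐ z ∂(μ ξ), z ∈ Metric.closedBall (0 : ℂ) r

/-- `T` is the operator integral of `f`. -/
structure OpInt {K : Type*} [NormedAddCommGroup K] [InnerProductSpace ℂ K]
    (μ : K → Measure ℂ) (r : ℝ) (f : ℂ → ℂ) (T : K →L[ℂ] K) : Prop where
  sm : StronglyMeasurable f
  bdd : ∃ c, ∀ z ∈ Metric.closedBall (0 : ℂ) r, ‖f z‖ ≤ c
  eq : ∀ ξ, ⟪ξ, T ξ⟫_ℂ = ∫ z, f z ∂(μ ξ)

section pvm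
set_option linter.unusedSectionVars false
variable {K : Type*} [NormedAddCommGroup K] [InnerProductSpace ℂ K] [CompleteSpace K]
  {E : Set ℂ → K →L[ℂ] K} {μ : K → Measure ℂ} {r : ℝ}

theorem clm_ext_diag {S T : K →L[ℂ] K} (h : ∀ x, ⟪x, S x⟫_ℂ = ⟪x, T x⟫_ℂ) : S = T := by
  have := (ext_inner_map (S : K →ₗ[ℂ] K) (T : K →ₗ[ℂ] K)).1 (fun x => by
    have := congrArg conj (h x)
    simpa [inner_conj_symm] using this)
  exact ContinuousLinearMap.coe_injective this

theorem PVM.idem (h : PVM E μ r) {B : Set ℂ} (hB : MeasurableSet B) (x : K) :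
    E B (E B x) = E B x := by
  rw [← h.inter B B hB hB, Set.inter_self]

theorem PVM.comm (h : PVM E μ r) {A B : Set ℂ} (hA : MeasurableSet A) (hB : MeasurableSet B)
    (x : K) : E A (E B x) = E B (E A x) := by
  rw [← h.inter A B hA hB, ← h.inter B A hB hA, Set.inter_comm]

theorem PVM.inner_eq (h : PVM E μ r) {B : Set ℂ} (hB : MeasurableSet B) (x : K) :
    ⟪x, E B x⟫_ℂ = ((‖E B x‖ ^ 2 : ℝ) : ℂ) := by
  rw [← h.idem hB, ← h.sa B hB, inner_self_eq_norm_sq_to_K, h.idem hB]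
  simp

theorem PVM.finite (h : PVM E μ r) (ξ : K) : IsFiniteMeasure (μ ξ) :=
  ⟨by rw [h.meas ξ _ MeasurableSet.univ]; exact ENNReal.ofReal_lt_top⟩

theorem PVM.real (h : PVM E μ r) (ξ : K) {B : Set ℂ} (hB : MeasurableSet B) :
    (μ ξ).real B = ‖E B ξ‖ ^ 2 := by
  rw [Measure.real, h.meas ξ B hB, ENNReal.toReal_ofReal (by positivity)]

theorem PVM.real_univ (h : PVM E μ r) (ξ : K) : (μ ξ).real Set.univ = ‖ξ‖ ^ 2 := by
  rw [h.real ξ MeasurableSet.univ, h.univ]; simp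

theorem PVM.restrict (h : PVM E μ r) (ξ : K) {B : Set ℂ} (hB : MeasurableSet B) :
    μ (E B ξ) = (μ ξ).restrict B := by
  ext A hA
  rw [Measure.restrict_apply hA, h.meas _ _ hA, h.meas _ _ (hA.inter hB), h.inter A B hA hB]

theorem PVM.compl (h : PVM E μ r) {B : Set ℂ} (hB : MeasurableSet B) (x : K) :
    E B x + E Bᶜ x = x := by
  have : E B + E Bᶜ = 1 := by
    apply clm_ext_diag
    intro x
    have := h.finite x
    simp only [add_apply, inner_add_right, h.inner_eq hB, h.inner_eq hB.compl,
      one_apply_eq_self, inner_self_eq_norm_sq_to_K]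
    rw [← h.real _ hB, ← h.real _ hB.compl]
    have h2 := measureReal_add_measureReal_compl (μ := μ x) hB
    rw [h.real_univ] at h2
    rw [← Complex.ofReal_add, h2]; simp
  simpa using congrArg (fun T : K →L[ℂ] K => T x) this

theorem OpInt.integrable (h : PVM E μ r) {f : ℂ → ℂ} {T : K →L[ℂ] K} (hf : OpInt μ r f T) (ξ : K) :
    Integrable f (μ ξ) := by
  have := h.finite ξ
  obtain ⟨c, hc⟩ := hf.bdd
  refine Integrable.of_bound hf.sm.aestronglyMeasurable c ?_
  filter_upwards [h.ball ξ] with z hz using hc z hz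

theorem PVM.refl_measure (h : PVM E μ r) {B : Set ℂ} (hB : MeasurableSet B) (ξ : K) :
    μ (ξ - (2 : ℂ) • E B ξ) = μ ξ := by
  ext A hA
  rw [h.meas _ _ hA, h.meas _ _ hA]
  congr 1
  rw [map_sub, map_smul, h.comm hA hB]
  set y := E A ξ
  have h1 := norm_sub_sq (𝕜 := ℂ) y ((2 : ℂ) • E B y)
  have h2 : RCLike.re ⟪y, (2 : ℂ) • E B y⟫_ℂ = 2 * ‖E B y‖ ^ 2 := by
    rw [inner_smul_right, h.inner_eq hB]
    have : (2 : ℂ) * ((‖E B y‖ ^ 2 : ℝ) : ℂ) = ((2 * ‖E B y‖ ^ 2 : ℝ) : ℂ) := by push_cast; ring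
    rw [this]
    exact Complex.ofReal_re _
  rw [h1, h2, norm_smul, Complex.norm_ofNat]
  ring

theorem OpInt.comm (h : PVM E μ r) {f : ℂ → ℂ} {T : K →L[ℂ] K} (hf : OpInt μ r f T)
    {B : Set ℂ} (hB : MeasurableSet B) (x : K) : T (E B x) = E B (T x) := by
  set U : K →L[ℂ] K := 1 - (2 : ℂ) • E B with hU
  have hUx : ∀ x, U x = x - (2 : ℂ) • E B x := fun x => by simp [hU]
  have hUsa : ∀ x y, ⟪U x, y⟫_ℂ = ⟪x, U y⟫_ℂ := fun x y => by
    rw [hUx, hUx, inner_sub_left, inner_sub_right, inner_smul_left, inner_smul_right, h.sa B hB,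
      Complex.conj_ofNat]
  have hUU : ∀ x, U (U x) = x := fun x => by
    rw [hUx, hUx]; simp only [map_sub, map_smul, h.idem hB]; module
  have key : U ∘L T ∘L U = T := by
    apply clm_ext_diag
    intro x
    simp only [ContinuousLinearMap.comp_apply]
    rw [← hUsa, hf.eq, hf.eq, hUx, h.refl_measure hB]
  have h1 : U (T (U (U x))) = T (U x) := congrArg (fun T : K →L[ℂ] K => T (U x)) key
  rw [hUU, hUx, hUx, map_sub, map_smul] at h1
  have h2 : (2 : ℂ) • E B (T x) = (2 : ℂ) • T (E B x) := by simpa using h1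
  exact (smul_right_injective K (two_ne_zero (α := ℂ)) h2).symm

theorem OpInt.add (h : PVM E μ r) {f g : ℂ → ℂ} {T V : K →L[ℂ] K} (hf : OpInt μ r f T)
    (hg : OpInt μ r g V) : OpInt μ r (fun z => f z + g z) (T + V) := by
  refine ⟨hf.sm.add hg.sm, ?_, fun ξ => ?_⟩
  · obtain ⟨c, hc⟩ := hf.bdd
    obtain ⟨d, hd⟩ := hg.bdd
    exact ⟨c + d, fun z hz => (norm_add_le _ _).trans (add_le_add (hc z hz) (hd z hz))⟩
  · rw [integral_add (hf.integrable h ξ) (hg.integrable h ξ), ← hf.eq, ← hg.eq]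
    simp

theorem OpInt.smul {f : ℂ → ℂ} {T : K →L[ℂ] K} (hf : OpInt μ r f T) (a : ℂ) :
    OpInt μ r (fun z => a * f z) (a • T) := by
  refine ⟨hf.sm.const_mul a, ?_, fun ξ => ?_⟩
  · obtain ⟨c, hc⟩ := hf.bdd
    refine ⟨‖a‖ * c, fun z hz => ?_⟩
    rw [norm_mul]
    exact mul_le_mul_of_nonneg_left (hc z hz) (norm_nonneg _)
  · rw [integral_const_mul, ← hf.eq]
    simp

theorem OpInt.star {f : ℂ → ℂ} {T : K →L[ℂ] K} (hf : OpInt μ r f T) :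
    OpInt μ r (fun z => conj (f z)) (ContinuousLinearMap.adjoint T) := by
  refine ⟨Complex.continuous_conj.comp_stronglyMeasurable hf.sm, ?_, fun ξ => ?_⟩
  · obtain ⟨c, hc⟩ := hf.bdd
    exact ⟨c, fun z hz => by simpa using hc z hz⟩
  · rw [integral_conj, ← hf.eq, ContinuousLinearMap.adjoint_inner_right, inner_conj_symm]

theorem OpInt.one (h : PVM E μ r) : OpInt μ r (fun _ => 1) (1 : K →L[ℂ] K) := by
  refine ⟨stronglyMeasurable_const, ⟨1, by simp⟩, fun ξ => ?_⟩
  have := h.finite ξ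
  rw [integral_const, h.real_univ]
  simp [inner_self_eq_norm_sq_to_K]

theorem OpInt.mul_ind (h : PVM E μ r) {f : ℂ → ℂ} {T : K →L[ℂ] K} (hf : OpInt μ r f T)
    {B : Set ℂ} (hB : MeasurableSet B) :
    OpInt μ r (fun z => f z * B.indicator (fun _ => 1) z) (T ∘L E B) := by
  have e : (fun z => f z * B.indicator (fun _ => 1) z) = B.indicator f := by
    ext z; by_cases hz : z ∈ B <;> simp [hz]
  rw [e]
  refine ⟨hf.sm.indicator hB, ?_, fun ξ => ?_⟩
  · obtain ⟨c, hc⟩ := hf.bdd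
    refine ⟨c, fun z hz => (norm_indicator_le_norm_self f z).trans (hc z hz)⟩
  · rw [integral_indicator hB, ← h.restrict ξ hB, ← hf.eq, h.sa B hB, ← hf.comm h hB, h.idem hB]
    rfl

theorem OpInt.simple (h : PVM E μ r) (s : SimpleFunc ℂ ℂ) :
    ∃ A : K →L[ℂ] K, OpInt μ r s A ∧
      ∀ f T, OpInt μ r f T → OpInt μ r (fun z => f z * s z) (T ∘L A) := by
  induction s using SimpleFunc.induction with
  | const c hB =>
    rename_i B
    refine ⟨c • E B, ?_, fun f T hf => ?_⟩
    · have := (((OpInt.one h).mul_ind h hB).smul c)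
      convert this using 1
      · ext z; by_cases hz : z ∈ B <;> simp [hz]
      · ext z; simp
    · have := ((hf.mul_ind h hB).smul c)
      convert this using 1
      · ext z; by_cases hz : z ∈ B <;> simp [hz, mul_comm]
      · ext z; simp
  | add _ h1 h2 =>
    obtain ⟨A, hA, hA'⟩ := h1
    obtain ⟨B, hB, hB'⟩ := h2
    refine ⟨A + B, hA.add h hB, fun f T hf => ?_⟩
    have := (hA' f T hf).add h (hB' f T hf)
    convert this using 1
    · ext z; simp [mul_add]
    · ext z; simp

/-- Polarization. -/
theorem polar (T : K →L[ℂ] K) (ξ η : K) : ⟪η, T ξ⟫_ℂ = (4 : ℂ)⁻¹ *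
    (⟪ξ + η, T (ξ + η)⟫_ℂ - ⟪ξ - η, T (ξ - η)⟫_ℂ
    + Complex.I * (⟪ξ + Complex.I • η, T (ξ + Complex.I • η)⟫_ℂ
      - ⟪ξ - Complex.I • η, T (ξ - Complex.I • η)⟫_ℂ)) := by
  simp only [map_add, map_sub, map_smul, inner_add_left, inner_add_right, inner_sub_left,
    inner_sub_right, inner_smul_left, inner_smul_right, Complex.conj_I]
  linear_combination ((2:ℂ)⁻¹ * ⟪η, T ξ⟫_ℂ - (2:ℂ)⁻¹ * ⟪ξ, T η⟫_ℂ) * Complex.I_sq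

theorem OpInt.mul (h : PVM E μ r) {f g : ℂ → ℂ} {T V : K →L[ℂ] K} (hf : OpInt μ r f T)
    (hg : OpInt μ r g V) : OpInt μ r (fun z => f z * g z) (T ∘L V) := by
  obtain ⟨c, hc⟩ := hf.bdd
  obtain ⟨d', hd'⟩ := hg.bdd
  set d := max d' 0
  have hd0 : 0 ≤ d := le_max_right _ _
  have hd : ∀ z ∈ Metric.closedBall (0 : ℂ) r, ‖g z‖ ≤ d :=
    fun z hz => (hd' z hz).trans (le_max_left _ _)
  refine ⟨hf.sm.mul hg.sm, ⟨c * d, fun z hz => ?_⟩, fun ξ => ?_⟩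
  · rw [norm_mul]
    exact mul_le_mul (hc z hz) (hd z hz) (norm_nonneg _) ((norm_nonneg _).trans (hc z hz))
  let s : ℕ → SimpleFunc ℂ ℂ := fun n => hg.sm.approxBounded d n
  have hs : ∀ n z, ‖s n z‖ ≤ d := fun n z => hg.sm.norm_approxBounded_le hd0 n z
  have hst : ∀ z ∈ Metric.closedBall (0 : ℂ) r,
      Filter.Tendsto (fun n => s n z) Filter.atTop (nhds (g z)) := fun z hz =>
    hg.sm.tendsto_approxBounded_of_norm_le (hd z hz)
  choose A hA hA' using fun n => OpInt.simple h (s n)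
  have t1 : ∀ x, Filter.Tendsto (fun n => ⟪x, A n x⟫_ℂ) Filter.atTop (nhds ⟪x, V x⟫_ℂ) := by
    intro x
    have := h.finite x
    simp only [(hA _).eq, hg.eq]
    refine tendsto_integral_of_dominated_convergence (fun _ => d)
      (fun n => (s n).stronglyMeasurable.aestronglyMeasurable) (integrable_const _)
      (fun n => Filter.Eventually.of_forall (hs n)) ?_
    filter_upwards [h.ball x] with z hz using hst z hz
  have t2 : ∀ x y, Filter.Tendsto (fun n => ⟪y, A n x⟫_ℂ) Filter.atTop (nhds ⟪y, V x⟫_ℂ) := by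
    intro x y
    simp only [polar _ x y]
    exact ((((t1 _).sub (t1 _)).add (((t1 _).sub (t1 _)).const_mul _))).const_mul _
  have t3 : Filter.Tendsto (fun n => ⟪ξ, (T ∘L A n) ξ⟫_ℂ) Filter.atTop
      (nhds ⟪ξ, (T ∘L V) ξ⟫_ℂ) := by
    have e : ∀ W : K →L[ℂ] K, ⟪ξ, (T ∘L W) ξ⟫_ℂ = ⟪ContinuousLinearMap.adjoint T ξ, W ξ⟫_ℂ :=
      fun W => by rw [ContinuousLinearMap.comp_apply, ContinuousLinearMap.adjoint_inner_left]
    simp only [e]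
    exact t2 _ _
  refine tendsto_nhds_unique t3 ?_
  simp only [(hA' _ _ _ hf).eq]
  have := h.finite ξ
  refine tendsto_integral_of_dominated_convergence (fun _ => c * d)
      (fun n => (hf.sm.mul (s n).stronglyMeasurable).aestronglyMeasurable) (integrable_const _)
      (fun n => ?_) ?_
  · filter_upwards [h.ball ξ] with z hz
    rw [norm_mul]
    exact mul_le_mul (hc z hz) (hs n z) (norm_nonneg _) ((norm_nonneg _).trans (hc z hz))
  · filter_upwards [h.ball ξ] with z hz using (hst z hz).const_mul _

theorem PVM.unique {G : Set ℂ → K →L[ℂ] K} {ν : K → Measure ℂ} (h : PVM E μ r)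
    (h' : PVM G ν r) {S : K →L[ℂ] K} (hS : OpInt μ r (fun z => z) S)
    (hS' : OpInt ν r (fun z => z) S) (ξ : K) : μ ξ = ν ξ := by
  have := h.finite ξ
  have := h'.finite ξ
  apply Measure.ext_of_charFun
  ext t
  rw [charFun_apply, charFun_apply]
  set L : ℂ → ℂ := fun z => ((⟪z, t⟫_ℝ : ℝ) : ℂ) with hL
  have hLeq : L = fun z => (conj t / 2) * z + (t / 2) * conj z := by
    ext z
    simp only [hL, Complex.inner]
    rw [Complex.re_eq_add_conj]
    simp; ring
  obtain ⟨T, hT, hT'⟩ : ∃ T : K →L[ℂ] K, OpInt μ r L T ∧ OpInt ν r L T := by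
    rw [hLeq]
    exact ⟨_, (hS.smul _).add h (hS.star.smul _), (hS'.smul _).add h' (hS'.star.smul _)⟩
  have hpow : ∀ n : ℕ, ∃ V : K →L[ℂ] K, OpInt μ r (fun z => L z ^ n) V ∧
      OpInt ν r (fun z => L z ^ n) V := by
    intro n
    induction n with
    | zero => simpa using ⟨1, OpInt.one h, OpInt.one h'⟩
    | succ n ih =>
      obtain ⟨V, hV, hV'⟩ := ih
      simp only [pow_succ]
      exact ⟨_, hV.mul h hT, hV'.mul h' hT'⟩
  obtain ⟨c, hc⟩ := hT.bdd
  have hser : ∀ ρ : Measure ℂ, IsFiniteMeasure ρ → (∀ᵐ z ∂ρ, z ∈ Metric.closedBall (0 : ℂ) r) →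
      HasSum (fun n : ℕ => ∫ z, (L z * Complex.I) ^ n / (n.factorial : ℂ) ∂ρ)
        (∫ z, Complex.exp (L z * Complex.I) ∂ρ) := by
    intro ρ _ hρ
    refine hasSum_integral_of_dominated_convergence (fun n _ => c ^ n / n.factorial) ?_ ?_ ?_ ?_ ?_
    · intro n
      simp only [div_eq_mul_inv]
      exact (((hT.sm.mul_const _).pow n).mul_const _).aestronglyMeasurable
    · intro n
      filter_upwards [hρ] with z hz
      rw [norm_div, norm_pow, norm_mul, Complex.norm_I, mul_one, Complex.norm_natCast]
      gcongr
      exact hc z hz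
    · exact Filter.Eventually.of_forall fun _ => Real.summable_pow_div_factorial c
    · exact integrable_const _
    · refine Filter.Eventually.of_forall fun z => ?_
      rw [Complex.exp_eq_exp_ℂ]
      exact NormedSpace.expSeries_div_hasSum_exp _
  refine (hser _ inferInstance (h.ball ξ)).unique ?_
  convert hser _ inferInstance (h'.ball ξ) using 2 with n
  obtain ⟨V, hV, hV'⟩ := hpow n
  simp only [mul_pow, div_eq_mul_inv, integral_mul_const, ← hV.eq, ← hV'.eq]

theorem OpInt.norm_bound (h : PVM E μ r) {S : K →L[ℂ] K} (hS : OpInt μ r (fun z => z) S)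
    (z₀ : ℂ) {ε : ℝ} (hε : 0 ≤ ε) (x : K) (hx : E (Metric.ball z₀ ε) x = x) :
    ‖z₀ • x - S x‖ ≤ ε * ‖x‖ := by
  have hg := ((OpInt.one h).smul z₀).add h (hS.smul (-1))
  have hgg := (hg.star.mul h hg).eq x
  set V : K →L[ℂ] K := z₀ • 1 + (-1 : ℂ) • S with hV
  have hVx : V x = z₀ • x - S x := by simp [hV, sub_eq_add_neg]
  rw [ContinuousLinearMap.comp_apply, ContinuousLinearMap.adjoint_inner_right,
    inner_self_eq_norm_sq_to_K, hVx] at hgg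
  have hfin := h.finite x
  have hae : ∀ᵐ z ∂(μ x), z ∈ Metric.ball z₀ ε := by
    have := ae_restrict_mem (μ := μ x) (s := Metric.ball z₀ ε) Metric.isOpen_ball.measurableSet
    rwa [← h.restrict x Metric.isOpen_ball.measurableSet, hx] at this
  have hb := norm_integral_le_of_norm_le_const (μ := μ x) (C := ε ^ 2)
    (f := fun z => conj (z₀ * 1 + -1 * z) * (z₀ * 1 + -1 * z)) (by
      filter_upwards [hae] with z hz
      have hz' : ‖z₀ * 1 + -1 * z‖ ≤ ε := by
        have : z₀ * 1 + -1 * z = z₀ - z := by ring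
        rw [this, ← dist_eq_norm, dist_comm]
        exact (Metric.mem_ball.1 hz).le
      rw [norm_mul, Complex.norm_conj, sq]
      exact mul_le_mul hz' hz' (norm_nonneg _) hε)
  rw [← hgg, h.real_univ, ← mul_pow] at hb
  simp only [norm_pow, Complex.coe_algebraMap, Complex.norm_real, norm_norm] at hb
  exact (sq_le_sq₀ (norm_nonneg _) (by positivity)).1 (by simpa using hb)

theorem OpInt.local_null (h : PVM E μ r) {S : K →L[ℂ] K} (hS : OpInt μ r (fun z => z) S)
    (P : K →L[ℂ] K) (hinv : ∀ ξ, P ξ = ξ → P (S ξ) = S ξ) (z₀ : ℂ)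
    (hspec : ∀ y : K, P y = y → ∃! x : K, P x = x ∧ z₀ • x - S x = y) :
    ∃ ε > 0, ∀ ξ, P ξ = ξ → E (Metric.ball z₀ ε) ξ = 0 := by
  let M : Submodule ℂ K := LinearMap.ker ((P - 1 : K →L[ℂ] K) : K →ₗ[ℂ] K)
  have hM : ∀ x, x ∈ M ↔ P x = x := fun x => by simp [M, sub_eq_zero]
  have hMc : IsClosed (M : Set K) := (P - 1 : K →L[ℂ] K).isClosed_ker
  have : CompleteSpace M := hMc.completeSpace_coe
  let V : M →L[ℂ] M := ((z₀ • (1 : K →L[ℂ] K) - S) ∘L M.subtypeL).codRestrict M (fun x => by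
    have hx := (hM _).1 x.2
    rw [hM]
    simp [hx, hinv _ hx])
  have hVx : ∀ x : M, (V x : K) = z₀ • (x : K) - S x := fun x => by simp [V]
  have hinj : (V : M →ₗ[ℂ] M).ker = ⊥ := by
    rw [LinearMap.ker_eq_bot']
    intro m hm
    obtain ⟨x, hx, hu⟩ := hspec 0 (map_zero _)
    have h1 := hu m ⟨(hM _).1 m.2, by rw [← hVx]; exact congrArg Subtype.val hm⟩
    have h2 := hu 0 (by simp)
    exact Subtype.ext (h1.trans h2.symm)
  have hsurj : (V : M →ₗ[ℂ] M).range = ⊤ := by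
    rw [LinearMap.range_eq_top]
    intro y
    obtain ⟨x, hx, -⟩ := hspec y ((hM _).1 y.2)
    exact ⟨⟨x, (hM _).2 hx.1⟩, Subtype.ext ((hVx _).trans hx.2)⟩
  let e := ContinuousLinearEquiv.ofBijective V hinj hsurj
  set c := ‖(e.symm : M →L[ℂ] M)‖ with hc
  have hc0 : 0 ≤ c := norm_nonneg _
  set ε : ℝ := 1 / (2 * (c + 1)) with hε
  have hε0 : 0 < ε := by positivity
  refine ⟨ε, hε0, fun ξ hξ => ?_⟩
  set B := Metric.ball z₀ ε
  have hB : MeasurableSet B := Metric.isOpen_ball.measurableSet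
  let Q : M →L[ℂ] K := E B ∘L M.subtypeL
  have hQ : ‖Q‖ ≤ 1 / 2 * ‖Q‖ := by
    refine ContinuousLinearMap.opNorm_le_bound _ (by positivity) fun m => ?_
    set x := e.symm m with hx
    have hVm : V x = m := e.apply_symm_apply m
    have hm : (m : K) = z₀ • (x : K) - S x := by rw [← hVx, hVm]
    have h1 : Q m = z₀ • (E B x) - S (E B x) := by
      change E B (m : K) = _
      rw [hm, map_sub, map_smul, hS.comm h hB]
    have h2 : ‖Q m‖ ≤ ε * ‖Q x‖ := by
      rw [h1]
      exact hS.norm_bound h z₀ hε0.le _ (h.idem hB _)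
    have h3 : ‖Q x‖ ≤ ‖Q‖ * (c * ‖m‖) := (Q.le_opNorm x).trans
      (mul_le_mul_of_nonneg_left ((e.symm : M →L[ℂ] M).le_opNorm m) (norm_nonneg _))
    have h4 : ε * c ≤ 1 / 2 := by
      rw [hε, div_mul_eq_mul_div, div_le_div_iff₀ (by positivity) (by norm_num)]
      linarith
    calc ‖Q m‖ ≤ ε * (‖Q‖ * (c * ‖m‖)) := h2.trans (mul_le_mul_of_nonneg_left h3 hε0.le)
      _ = (ε * c) * (‖Q‖ * ‖m‖) := by ring
      _ ≤ 1 / 2 * (‖Q‖ * ‖m‖) := mul_le_mul_of_nonneg_right h4 (by positivity)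
      _ = _ := by ring
  have hQn : ‖Q‖ = 0 := le_antisymm (by linarith) (ContinuousLinearMap.opNorm_nonneg Q)
  have hQ0 : Q = 0 := by
    ext m
    have := Q.le_opNorm m
    rw [hQn, zero_mul] at this
    simpa using this
  have := congrArg (fun T : M →L[ℂ] K => T ⟨ξ, (hM ξ).2 hξ⟩) hQ0
  simpa [Q] using this

theorem PVM.eq_zero_iff (h : PVM E μ r) {B : Set ℂ} (hB : MeasurableSet B) (ξ : K) :
    E B ξ = 0 ↔ μ ξ B = 0 := by
  rw [h.meas ξ B hB]
  simp only [ENNReal.ofReal_eq_zero]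
  constructor
  · intro h; simp [h]
  · intro h
    have : ‖E B ξ‖ ^ 2 = 0 := le_antisymm h (by positivity)
    simpa using this

theorem OpInt.closure_null (h : PVM E μ r) {S : K →L[ℂ] K} (hS : OpInt μ r (fun z => z) S)
    (P : K →L[ℂ] K) (hinv : ∀ ξ, P ξ = ξ → P (S ξ) = S ξ) (D : Set ℂ)
    (hspec : ∀ z₀ ∉ closure D, ∀ y : K, P y = y → ∃! x : K, P x = x ∧ z₀ • x - S x = y)
    {A : Set ℂ} (hA : MeasurableSet A) (hDA : closure D ⊆ A) (ξ : K) (hξ : P ξ = ξ) :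
    E A ξ = ξ := by
  have h0 : μ ξ (closure D)ᶜ = 0 := by
    refine measure_null_of_locally_null _ fun z hz => ?_
    obtain ⟨ε, hε, H⟩ := hS.local_null h P hinv z (hspec z hz)
    exact ⟨Metric.ball z ε, mem_nhdsWithin_of_mem_nhds (Metric.ball_mem_nhds z hε),
      (h.eq_zero_iff Metric.isOpen_ball.measurableSet ξ).1 (H ξ hξ)⟩
  have h1 : E Aᶜ ξ = 0 := (h.eq_zero_iff hA.compl ξ).2
    (measure_mono_null (Set.compl_subset_compl.2 hDA) h0)
  have := h.compl hA ξ
  rwa [h1, add_zero] at this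

end pvm

section conjugation
set_option linter.unusedSectionVars false
variable {K : Type*} [NormedAddCommGroup K] [InnerProductSpace ℂ K] [CompleteSpace K]
  {E : Set ℂ → K →L[ℂ] K} {μ : K → Measure ℂ} {r : ℝ} {C : K → K}

theorem IsConjugation.norm (hC : IsConjugation C) (x : K) : ‖C x‖ = ‖x‖ := by
  have h := hC.inner_map x x
  rw [inner_self_eq_norm_sq_to_K, inner_self_eq_norm_sq_to_K] at h
  have h2 : ‖C x‖ ^ 2 = ‖x‖ ^ 2 := by
    have : ((‖C x‖ ^ 2 : ℝ) : ℂ) = ((‖x‖ ^ 2 : ℝ) : ℂ) := by simpa using h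
    exact Complex.ofReal_injective this
  exact (sq_eq_sq₀ (norm_nonneg _) (norm_nonneg _)).1 h2

theorem IsConjugation.map_zero (hC : IsConjugation C) : C 0 = 0 := by
  have := hC.norm 0
  simpa using this

/-- The operator `C ∘ T ∘ C`. -/
noncomputable def conjOp (hC : IsConjugation C) (T : K →L[ℂ] K) : K →L[ℂ] K :=
  LinearMap.mkContinuous
    { toFun := fun x => C (T (C x))
      map_add' := fun x y => by rw [hC.map_add, map_add, hC.map_add]
      map_smul' := fun a x => by rw [hC.map_smul, map_smul, hC.map_smul]; simp } ‖T‖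
    (fun x => by
      change ‖C (T (C x))‖ ≤ _
      rw [hC.norm]
      exact (T.le_opNorm _).trans_eq (by rw [hC.norm]))

theorem conjOp_apply (hC : IsConjugation C) (T : K →L[ℂ] K) (x : K) :
    conjOp hC T x = C (T (C x)) := rfl

theorem IsConjugation.inner_swap (hC : IsConjugation C) (x y : K) :
    ⟪C x, y⟫_ℂ = conj ⟪x, C y⟫_ℂ := by
  rw [← hC.inner_map, hC.invol]

theorem PVM.conj (h : PVM E μ r) (hC : IsConjugation C) :
    PVM (fun B => conjOp hC (E (conj ⁻¹' B))) (fun ξ => (μ (C ξ)).map conj) r where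
  sa B hB x y := by
    have hB' : MeasurableSet (conj ⁻¹' B : Set ℂ) := Complex.continuous_conj.measurable hB
    rw [conjOp_apply, conjOp_apply, hC.inner_swap, h.sa _ hB', ← hC.inner_map, hC.invol]
  univ := by ext x; simp [conjOp_apply, h.univ, hC.invol]
  inter A B hA hB x := by
    have hA' : MeasurableSet (conj ⁻¹' A : Set ℂ) := Complex.continuous_conj.measurable hA
    have hB' : MeasurableSet (conj ⁻¹' B : Set ℂ) := Complex.continuous_conj.measurable hB
    simp only [conjOp_apply]
    rw [Set.preimage_inter, h.inter _ _ hA' hB', hC.invol]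
  meas ξ B hB := by
    have hB' : MeasurableSet (conj ⁻¹' B : Set ℂ) := Complex.continuous_conj.measurable hB
    rw [Measure.map_apply Complex.continuous_conj.measurable hB, h.meas _ _ hB', conjOp_apply,
      hC.norm]
  ball ξ := by
    refine (ae_map_iff Complex.continuous_conj.measurable.aemeasurable
      Metric.isClosed_closedBall.measurableSet).2 ?_
    filter_upwards [h.ball (C ξ)] with z hz
    simpa using hz

theorem PVM.conj_eq (h : PVM E μ r) (hC : IsConjugation C) {S : K →L[ℂ] K}
    (hflat : ∀ ξ : K, C (S (C ξ)) = S ξ)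
    (hS : OpInt μ r (fun z => z) S) {B : Set ℂ} (hB : MeasurableSet B) (x : K) :
    C (E (conj ⁻¹' B) (C x)) = E B x := by
  have h' := h.conj hC
  have hS' : OpInt (fun ξ => (μ (C ξ)).map conj) r (fun z => z) S := by
    refine ⟨hS.sm, hS.bdd, fun ξ => ?_⟩
    rw [integral_map Complex.continuous_conj.measurable.aemeasurable
      hS.sm.aestronglyMeasurable, ← hS.star.eq, ContinuousLinearMap.adjoint_inner_right,
      ← inner_conj_symm, ← hflat ξ, hC.inner_swap, Complex.conj_conj]
  have key : conjOp hC (E (conj ⁻¹' B)) = E B := by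
    apply clm_ext_diag
    intro ξ
    have hm := congrArg (fun m : Measure ℂ => m.real B) (h.unique h' hS hS' ξ)
    rw [h.real ξ hB, h'.real ξ hB] at hm
    rw [h.inner_eq hB, h'.inner_eq hB, hm]
  rw [← key, conjOp_apply]

theorem IsSpectralMeasure.pvm {S : K →L[ℂ] K} (hE : IsSpectralMeasure (spectrum ℂ S) E μ)
    (hr : spectrum ℂ S ⊆ Metric.closedBall 0 r) :
    PVM (fun B => E (B ∩ spectrum ℂ S)) μ r := by
  have hm : MeasurableSet (spectrum ℂ S) := (spectrum.isClosed S).measurableSet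
  have hsa : ∀ (B : Set ℂ), MeasurableSet B → ∀ x y,
      ⟪E (B ∩ spectrum ℂ S) x, y⟫_ℂ = ⟪x, E (B ∩ spectrum ℂ S) y⟫_ℂ := fun B hB x y =>
    (ContinuousLinearMap.isSelfAdjoint_iff_isSymmetric.1
      (hE.selfAdjoint _ (hB.inter hm) Set.inter_subset_right)) x y
  have hint : ∀ A B : Set ℂ, MeasurableSet A → MeasurableSet B → ∀ x,
      E ((A ∩ B) ∩ spectrum ℂ S) x = E (A ∩ spectrum ℂ S) (E (B ∩ spectrum ℂ S) x) := by
    intro A B hA hB x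
    rw [Set.inter_inter_distrib_right, hE.inter _ _ (hA.inter hm) (hB.inter hm)
      Set.inter_subset_right Set.inter_subset_right]
    rfl
  refine ⟨hsa, by simp [hE.univ], hint, fun ξ B hB => ?_, fun ξ => ?_⟩
  · have h1 : μ ξ B = μ ξ (B ∩ spectrum ℂ S) := by
      refine (measure_inter_conull ?_).symm
      exact hE.measure_compl ξ
    rw [h1, hE.measure_eq ξ _ (hB.inter hm) Set.inter_subset_right]
    congr 1
    have h2 := hint B B hB hB ξ
    rw [Set.inter_self] at h2
    rw [h2, ← hsa B hB, inner_self_eq_norm_sq_to_K, ← h2]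
    simp [← Complex.ofReal_pow]
  · have : ∀ᵐ z ∂(μ ξ), z ∈ spectrum ℂ S := by
      rw [ae_iff]; exact hE.measure_compl ξ
    filter_upwards [this] with z hz using hr hz

theorem PVM.smul_measure (h : PVM E μ r) (a : ℂ) (ξ : K) (f : ℂ → ℂ) :
    ∫ z, f z ∂(μ (a • ξ)) = ((‖a‖ ^ 2 : ℝ) : ℂ) * ∫ z, f z ∂(μ ξ) := by
  have : μ (a • ξ) = ENNReal.ofReal (‖a‖ ^ 2) • μ ξ := by
    ext B hB
    rw [h.meas _ _ hB, Measure.smul_apply, h.meas _ _ hB, map_smul, norm_smul, smul_eq_mul,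
      ← ENNReal.ofReal_mul (by positivity), mul_pow]
  rw [this, integral_smul_measure, ENNReal.toReal_ofReal (by positivity)]
  simp

theorem PVM.opInt (h : PVM E μ r) {S : K →L[ℂ] K}
    (hSE : ∀ ξ η : K, ⟪η, S ξ⟫_ℂ = specInt μ (fun z => z) ξ η) :
    OpInt μ r (fun z => z) S := by
  refine ⟨stronglyMeasurable_id, ⟨r, fun z hz => by simpa using hz⟩, fun ξ => ?_⟩
  rw [hSE, specInt]
  have e1 : ξ + ξ = (2 : ℂ) • ξ := (two_smul ℂ ξ).symm
  have e2 : ξ - ξ = (0 : ℂ) • ξ := by simp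
  have e3 : ξ + Complex.I • ξ = (1 + Complex.I) • ξ := by module
  have e4 : ξ - Complex.I • ξ = (1 - Complex.I) • ξ := by module
  have n3 : ‖(1 : ℂ) + Complex.I‖ ^ 2 = 2 := by
    rw [← Complex.normSq_eq_norm_sq, Complex.normSq_apply]; norm_num
  have n4 : ‖(1 : ℂ) - Complex.I‖ ^ 2 = 2 := by
    rw [← Complex.normSq_eq_norm_sq, Complex.normSq_apply]; norm_num
  rw [e1, e2, e3, e4]
  simp only [h.smul_measure _ ξ (fun z => z), n3, n4]
  simp
  ring

end conjugation

/-- **uniqueness of the real spectral measure, bounded case.**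
Let `C` be a conjugation on `K`, `S` a bounded normal operator with `S♭ = S`, and `E` (with
diagonal scalar measures `μ`) the spectral measure of `S` on `𝔖 = σ(S)`.  If `F` is a map on
`Bor_E(𝔖)` whose values are self-adjoint idempotents commuting with `C`, with `F(∅) = 0`,
`F(𝔖) = I`, `F(A ∩ B) = F(A)F(B)`, weakly countably additive, such that every `F(A)K` is
`S`-invariant and the spectrum of `S|F(A)K` is contained in `closure A`, then `F = E` on
`Bor_E(𝔖)`. -/
theorem spectralMeasure_uniqueness_bounded
    {K : Type*} [NormedAddCommGroup K] [InnerProductSpace ℂ K] [CompleteSpace K]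
    {C : K → K} (hC : IsConjugation C) (S : K →L[ℂ] K)
    (hnormal : (ContinuousLinearMap.adjoint S) ∘L S = S ∘L (ContinuousLinearMap.adjoint S))
    (hflat : ∀ ξ : K, C (S (C ξ)) = S ξ)
    (E : Set ℂ → K →L[ℂ] K) (μ : K → Measure ℂ)
    (hE : IsSpectralMeasure (spectrum ℂ S) E μ)
    (hSE : ∀ ξ η : K, ⟪η, S ξ⟫_ℂ = specInt μ (fun z => z) ξ η)
    (F : Set ℂ → K →L[ℂ] K)
    (hFsa : ∀ A ∈ borE C (spectrum ℂ S) E, IsSelfAdjoint (F A))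
    (hFidem : ∀ A ∈ borE C (spectrum ℂ S) E, F A ∘L F A = F A)
    (hFflat : ∀ A ∈ borE C (spectrum ℂ S) E, ∀ ξ : K, C (F A (C ξ)) = F A ξ)
    (hFempty : F ∅ = 0) (hFuniv : F (spectrum ℂ S) = 1)
    (hFinter : ∀ A ∈ borE C (spectrum ℂ S) E, ∀ B ∈ borE C (spectrum ℂ S) E,
      F (A ∩ B) = F A ∘L F B)
    (hFadd : ∀ (ξ η : K) (A : ℕ → Set ℂ), (∀ n, A n ∈ borE C (spectrum ℂ S) E) →
      Pairwise (Function.onFun Disjoint A) →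
      HasSum (fun n => ⟪η, F (A n) ξ⟫_ℂ) ⟪η, F (⋃ n, A n) ξ⟫_ℂ)
    (hFSinv : ∀ A ∈ borE C (spectrum ℂ S) E, ∀ ξ : K, F A ξ = ξ → F A (S ξ) = S ξ)
    (hFspec : ∀ A ∈ borE C (spectrum ℂ S) E, ∀ z₀ : ℂ, z₀ ∉ closure A →
      ∀ y : K, F A y = y → ∃! x : K, F A x = x ∧ z₀ • x - S x = y) :
    ∀ A ∈ borE C (spectrum ℂ S) E, F A = E A := by
  obtain ⟨r, hr⟩ := (spectrum.isCompact S).isBounded.subset_closedBall (0 : ℂ)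
  have hm : MeasurableSet (spectrum ℂ S) := (spectrum.isClosed S).measurableSet
  have hP := hE.pvm hr
  have hI := hP.opInt hSE
  have hconj : ∀ B : Set ℂ, MeasurableSet B → ∀ x,
      C (E ((conj ⁻¹' B) ∩ spectrum ℂ S) (C x)) = E (B ∩ spectrum ℂ S) x :=
    fun B hB x => hP.conj_eq hC hflat hI hB x
  have hsym : ∀ B : Set ℂ, MeasurableSet B → conj ⁻¹' B = B →
      B ∩ spectrum ℂ S ∈ borE C (spectrum ℂ S) E := fun B hB hBs =>
    ⟨hB.inter hm, Set.inter_subset_right, fun ξ => by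
      have := hconj B hB ξ
      rwa [hBs] at this⟩
  have hEmem : ∅ ∈ borE C (spectrum ℂ S) E :=
    ⟨MeasurableSet.empty, Set.empty_subset _, fun ξ => by simp [hE.empty, hC.map_zero]⟩
  have hEcompl : ∀ A, MeasurableSet A → A ⊆ spectrum ℂ S → ∀ x,
      E A x + E (spectrum ℂ S \ A) x = x := by
    intro A hA hAS x
    have h1 := hP.compl hA x
    have e1 : A ∩ spectrum ℂ S = A := Set.inter_eq_left.2 hAS
    have e2 : Aᶜ ∩ spectrum ℂ S = spectrum ℂ S \ A := by
      rw [Set.inter_comm, Set.sdiff_eq]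
    rwa [e1, e2] at h1
  have hcompl : ∀ A ∈ borE C (spectrum ℂ S) E,
      spectrum ℂ S \ A ∈ borE C (spectrum ℂ S) E := by
    rintro A ⟨hA, hAS, hAC⟩
    refine ⟨hm.diff hA, Set.sdiff_subset, fun ξ => ?_⟩
    have h1 := congrArg C (hEcompl A hA hAS (C ξ))
    rw [hC.map_add, hC.invol, hAC] at h1
    have h2 := hEcompl A hA hAS ξ
    exact add_left_cancel (h1.trans h2.symm)
  have hFsym : ∀ A ∈ borE C (spectrum ℂ S) E, ∀ x y, ⟪F A x, y⟫_ℂ = ⟪x, F A y⟫_ℂ :=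
    fun A hA => ContinuousLinearMap.isSelfAdjoint_iff_isSymmetric.1 (hFsa A hA)
  have hFi : ∀ A ∈ borE C (spectrum ℂ S) E, ∀ x, F A (F A x) = F A x := fun A hA x =>
    congrArg (fun T : K →L[ℂ] K => T x) (hFidem A hA)
  have hFsplit : ∀ A ∈ borE C (spectrum ℂ S) E, ∀ x, F A x + F (spectrum ℂ S \ A) x = x := by
    intro A hA x
    apply ext_inner_left ℂ
    intro η
    let D : ℕ → Set ℂ := fun n => if n = 0 then A else if n = 1 then spectrum ℂ S \ A else ∅
    have hD0 : D 0 = A := rfl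
    have hD1 : D 1 = spectrum ℂ S \ A := rfl
    have hD2 : ∀ n, n ≠ 0 → n ≠ 1 → D n = ∅ := fun n h0 h1 => by simp [D, h0, h1]
    have hDm : ∀ n, D n ∈ borE C (spectrum ℂ S) E := by
      intro n
      by_cases h0 : n = 0
      · subst h0; exact hA
      by_cases h1 : n = 1
      · subst h1; exact hcompl A hA
      rw [hD2 n h0 h1]; exact hEmem
    have hDd : Pairwise (Function.onFun Disjoint D) := by
      intro i j hij
      rw [Function.onFun, Set.disjoint_left]
      intro z hi hj
      simp only [D] at hi hj
      split_ifs at hi hj <;> simp_all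
    have hDU : ⋃ n, D n = spectrum ℂ S := by
      apply Set.Subset.antisymm
      · exact Set.iUnion_subset fun n => (hDm n).2.1
      · intro z hz
        by_cases hzA : z ∈ A
        · exact Set.mem_iUnion.2 ⟨0, hzA⟩
        · exact Set.mem_iUnion.2 ⟨1, hz, hzA⟩
    have hs := hFadd x η D hDm hDd
    rw [hDU, hFuniv] at hs
    have hs2 : HasSum (fun n => ⟪η, F (D n) x⟫_ℂ) (∑ n ∈ Finset.range 2, ⟪η, F (D n) x⟫_ℂ) := by
      apply hasSum_sum_of_ne_finset_zero
      intro n hn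
      rw [Finset.mem_range] at hn
      rw [hD2 n (by omega) (by omega), hFempty]; simp
    have := hs2.unique hs
    rw [Finset.sum_range_succ, Finset.sum_range_one, hD0, hD1] at this
    rw [inner_add_right, this]; simp
  have hFle : ∀ A ∈ borE C (spectrum ℂ S) E, ∀ B ∈ borE C (spectrum ℂ S) E, A ⊆ B → ∀ x,
      F A (F B x) = F A x := by
    intro A hA B hB hAB x
    have := hFinter A hA B hB
    rw [Set.inter_eq_left.2 hAB] at this
    exact (congrArg (fun T : K →L[ℂ] K => T x) this).symm
  have hFE : ∀ D ∈ borE C (spectrum ℂ S) E, ∀ A, MeasurableSet A → closure D ⊆ A → ∀ x,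
      E (A ∩ spectrum ℂ S) (F D x) = F D x := by
    intro D hD A hA hDA x
    exact hI.closure_null hP (F D) (hFSinv D hD) D (hFspec D hD) hA hDA _ (hFi D hD x)
  have hclosed : ∀ A : Set ℂ, IsClosed A → conj ⁻¹' A = A → ∀ x,
      F (A ∩ spectrum ℂ S) x = E (A ∩ spectrum ℂ S) x := by
    intro A hAc hAs x
    have hAm := hAc.measurableSet
    have hAb := hsym A hAm hAs
    rcases A.eq_empty_or_nonempty with rfl | hne
    · simp [hFempty, hE.empty]
    have h1 : ∀ x, E (A ∩ spectrum ℂ S) (F (A ∩ spectrum ℂ S) x) = F (A ∩ spectrum ℂ S) x :=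
      hFE _ hAb A hAm (closure_minimal Set.inter_subset_left hAc)
    let d : ℂ → ℝ := fun z => Metric.infDist z A
    have hdc : Continuous d := Metric.continuous_infDist_pt A
    have hdpos : ∀ z, 0 < d z ↔ z ∉ A := fun z => (hAc.notMem_iff_infDist_pos hne).symm
    have hdconj : ∀ z, d (conj z) = d z := by
      have key : ∀ z, d (conj z) ≤ d z := by
        intro z
        refine (Metric.le_infDist hne).2 fun y hy => ?_
        have hy' : conj y ∈ A := by
          have : y ∈ (conj ⁻¹' A : Set ℂ) := by rw [hAs]; exact hy
          exact this
        refine (Metric.infDist_le_dist_of_mem hy').trans_eq ?_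
        exact Complex.dist_conj_conj z y
      intro z
      refine le_antisymm (key z) ?_
      simpa using key (conj z)
    let D' : ℕ → Set ℂ := fun n => {z | 0 < d z ∧ ⌊1 / d z⌋₊ = n}
    have hD'm : ∀ n, MeasurableSet (D' n) := by
      intro n
      refine (measurableSet_lt measurable_const hdc.measurable).inter ?_
      have : Measurable fun z => ⌊1 / d z⌋₊ :=
        Nat.measurable_floor.comp (measurable_const.div hdc.measurable)
      exact this (measurableSet_singleton n)
    have hDm : ∀ n, D' n ∩ spectrum ℂ S ∈ borE C (spectrum ℂ S) E := fun n =>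
      hsym _ (hD'm n) (by ext z; simp [D', hdconj])
    have hDcl : ∀ n, closure (D' n ∩ spectrum ℂ S) ⊆ Aᶜ := by
      intro n
      have hsub : closure (D' n ∩ spectrum ℂ S) ⊆ {z | 1 / ((n : ℝ) + 1) ≤ d z} := by
        refine closure_minimal ?_ (isClosed_le continuous_const hdc)
        rintro z ⟨⟨hz0, hzn⟩, -⟩
        have h2 := Nat.lt_floor_add_one (1 / d z)
        rw [hzn] at h2
        have h3 : 1 / ((n : ℝ) + 1) < d z := by
          rw [div_lt_iff₀ hz0] at h2
          rw [div_lt_iff₀ (by positivity)]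
          linarith
        exact h3.le
      intro z hz
      have h2 : 1 / ((n : ℝ) + 1) ≤ d z := hsub hz
      exact (hdpos z).1 (lt_of_lt_of_le (by positivity) h2)
    have hDd : Pairwise (Function.onFun Disjoint fun n => D' n ∩ spectrum ℂ S) := by
      intro i j hij
      rw [Function.onFun, Set.disjoint_left]
      intro z hi hj
      exact hij (hi.1.2.symm.trans hj.1.2)
    have hDU : ⋃ n, D' n ∩ spectrum ℂ S = Aᶜ ∩ spectrum ℂ S := by
      ext z
      simp only [Set.mem_iUnion, Set.mem_inter_iff, Set.mem_compl_iff]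
      constructor
      · rintro ⟨n, hn, hz⟩
        exact ⟨(hdpos z).1 hn.1, hz⟩
      · rintro ⟨hz, hzs⟩
        exact ⟨_, ⟨(hdpos z).2 hz, rfl⟩, hzs⟩
    have h2 : ∀ x, E (Aᶜ ∩ spectrum ℂ S) (F (Aᶜ ∩ spectrum ℂ S) x)
        = F (Aᶜ ∩ spectrum ℂ S) x := by
      intro x
      apply ext_inner_left ℂ
      intro η
      have s1 := hFadd x (E (Aᶜ ∩ spectrum ℂ S) η) _ hDm hDd
      have s2 := hFadd x η _ hDm hDd
      rw [hDU] at s1 s2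
      rw [← hP.sa _ hAm.compl]
      refine s1.unique ?_
      convert s2 using 2 with n
      rw [hP.sa _ hAm.compl, hFE _ (hDm n) _ hAm.compl (hDcl n)]
    have e : spectrum ℂ S \ (A ∩ spectrum ℂ S) = Aᶜ ∩ spectrum ℂ S := by
      ext z; simp; tauto
    have h3 := hFsplit _ hAb x
    rw [e] at h3
    have h4 : E (A ∩ spectrum ℂ S) (F (Aᶜ ∩ spectrum ℂ S) x) = 0 := by
      rw [← h2 x]
      have := hP.inter A Aᶜ hAm hAm.compl (F (Aᶜ ∩ spectrum ℂ S) x)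
      simp only [Set.inter_compl_self, Set.empty_inter, hE.empty] at this
      exact this.symm
    have h5 := congrArg (E (A ∩ spectrum ℂ S)) h3
    rw [map_add, h4, h1, add_zero] at h5
    exact h5
  have hFn : ∀ A ∈ borE C (spectrum ℂ S) E, ∀ x, ⟪x, F A x⟫_ℂ = ((‖F A x‖ ^ 2 : ℝ) : ℂ) := by
    intro A hA x
    rw [← hFi A hA x, ← hFsym A hA, inner_self_eq_norm_sq_to_K, hFi A hA x]
    simp
  have hFcontr : ∀ A ∈ borE C (spectrum ℂ S) E, ∀ x, ‖F A x‖ ^ 2 ≤ ‖x‖ ^ 2 := by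
    intro A hA x
    have h1 := norm_inner_le_norm (𝕜 := ℂ) x (F A x)
    rw [hFn A hA x, Complex.norm_real, Real.norm_of_nonneg (by positivity)] at h1
    nlinarith [norm_nonneg x, norm_nonneg (F A x), sq_nonneg (‖x‖ - ‖F A x‖)]
  have hge : ∀ A ∈ borE C (spectrum ℂ S) E, ∀ x, ‖E A x‖ ^ 2 ≤ ‖F A x‖ ^ 2 := by
    rintro A hAb x
    obtain ⟨hA, hAS, hAC⟩ := id hAb
    have eA : A ∩ spectrum ℂ S = A := Set.inter_eq_left.2 hAS
    have hcm : MeasurableSet (conj ⁻¹' A : Set ℂ) := Complex.continuous_conj.measurable hA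
    have hE1 : ∀ y, E (conj ⁻¹' A ∩ spectrum ℂ S) y = E A y := by
      intro y
      have := hconj A hA (C y)
      rw [hC.invol, eA] at this
      rw [← hC.invol (E (conj ⁻¹' A ∩ spectrum ℂ S) y), this, hAC]
    have hA'm : MeasurableSet (A ∩ conj ⁻¹' A : Set ℂ) := hA.inter hcm
    have hreal : (μ x).real (A ∩ conj ⁻¹' A) = ‖E A x‖ ^ 2 := by
      rw [hP.real x hA'm, hP.inter A _ hA hcm, hE1, eA]
      have := hP.idem hA x
      rw [eA] at this
      rw [this]
    have hfin := hP.finite x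
    apply le_of_forall_pos_le_add
    intro ε hε
    obtain ⟨Q, hQA, hQc, hQ⟩ := hA'm.exists_isCompact_lt_add (μ := μ x) (measure_ne_top _ _)
      (ε := ENNReal.ofReal ε) (by simpa using hε)
    let Q' : Set ℂ := Q ∪ conj ⁻¹' Q
    have hQ'c : IsClosed Q' := hQc.isClosed.union (hQc.isClosed.preimage Complex.continuous_conj)
    have hQ's : conj ⁻¹' Q' = Q' := by
      ext z; simp [Q', or_comm]
    have hQ'A : Q' ⊆ A := by
      rintro z (hz | hz)
      · exact (hQA hz).1
      · have := (hQA hz).2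
        simpa using this
    have hQ'e : Q' ∩ spectrum ℂ S = Q' := Set.inter_eq_left.2 (hQ'A.trans hAS)
    have hQ'b : Q' ∈ borE C (spectrum ℂ S) E := by
      have := hsym Q' hQ'c.measurableSet hQ's
      rwa [hQ'e] at this
    have hFQ : F Q' x = E Q' x := by
      have := hclosed Q' hQ'c hQ's x
      rwa [hQ'e] at this
    have k1 : (μ x).real (A ∩ conj ⁻¹' A) ≤ (μ x).real Q + ε := by
      have := ENNReal.toReal_mono (by finiteness) hQ.le
      rwa [ENNReal.toReal_add (by finiteness) (by finiteness), ENNReal.toReal_ofReal hε.le] at this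
    have k2 : (μ x).real Q ≤ (μ x).real Q' := measureReal_mono Set.subset_union_left
    have k3 : (μ x).real Q' = ‖E Q' x‖ ^ 2 := by
      rw [hP.real x hQ'c.measurableSet, hQ'e]
    have k4 : ‖E Q' x‖ ^ 2 ≤ ‖F A x‖ ^ 2 := by
      rw [← hFQ, ← hFle Q' hQ'b A hAb hQ'A]
      exact hFcontr Q' hQ'b _
    linarith
  intro A hAb
  obtain ⟨hA, hAS, hAC⟩ := id hAb
  have eA : A ∩ spectrum ℂ S = A := Set.inter_eq_left.2 hAS
  apply clm_ext_diag
  intro x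
  have hEn : ∀ B, MeasurableSet B → B ⊆ spectrum ℂ S →
      ⟪x, E B x⟫_ℂ = ((‖E B x‖ ^ 2 : ℝ) : ℂ) := by
    intro B hB hBS
    have := hP.inner_eq hB x
    rwa [Set.inter_eq_left.2 hBS] at this
  have hAb' := hcompl A hAb
  have f1 := congrArg (fun y => ⟪x, y⟫_ℂ) (hFsplit A hAb x)
  have f2 := congrArg (fun y => ⟪x, y⟫_ℂ) (hEcompl A hA hAS x)
  simp only [inner_add_right] at f1 f2
  rw [← f2, hFn A hAb, hFn _ hAb', hEn A hA hAS, hEn _ hAb'.1 hAb'.2.1, ← Complex.ofReal_add,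
    ← Complex.ofReal_add] at f1
  have f3 := Complex.ofReal_injective f1
  rw [hFn A hAb, hEn A hA hAS]
  congr 1
  linarith [hge A hAb x, hge _ hAb' x]
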